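/- Shift of strict pre-dissipativity with quadratic storage to the origin (Lemma 4.3): Let (x_e,u_e) be a controlled equilibrium, P a bounded self-adjoint operator on H, w ∈ H, and α of class 𝒦. Define ℓ̃(x,u) := ‖Cx‖² + ‖Ku‖² + 2Re⟨z + C*C x_e, x⟩ + 2Re⟨v + K*K u_e, u⟩ and w̃ := w + P x_e. Then 2Re⟨Ax + Bu, Px + w⟩ ≤ ℓ(x,u) − ℓ(x_e,u_e) − α(‖x − x_e‖) holds for all x ∈ dom A and u ∈ U if and only if 2Re⟨Ax + Bu, Px + w̃⟩ ≤ ℓ̃(x,u) − α(‖x‖) holds for all x ∈ dom A and u ∈ U. -/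

import Mathlib

open scoped InnerProductSpace
open RCLike ContinuousLinearMap

/-- A function of class `𝒦`: continuous, strictly increasing on `[0,∞)` with `α 0 = 0`. -/
def IsClassK (α : ℝ → ℝ) : Prop :=
  ContinuousOn α (Set.Ici 0) ∧ StrictMonoOn α (Set.Ici 0) ∧ α 0 = 0

/-- The generalized linear-quadratic stage cost
`ℓ(x,u) = ‖Cx‖² + ‖Ku‖² + 2Re⟨z,x⟩ + 2Re⟨v,u⟩`. -/
noncomputable def ell {𝕜 H U Y Z : Type*} [RCLike 𝕜]
    [NormedAddCommGroup H] [InnerProductSpace 𝕜 H]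
    [NormedAddCommGroup U] [InnerProductSpace 𝕜 U]
    [NormedAddCommGroup Y] [InnerProductSpace 𝕜 Y]
    [NormedAddCommGroup Z] [InnerProductSpace 𝕜 Z]
    (C : H →L[𝕜] Y) (K : U →L[𝕜] Z) (z : H) (v : U) (x : H) (u : U) : ℝ :=
  ‖C x‖ ^ 2 + ‖K u‖ ^ 2 + 2 * re ⟪z, x⟫_𝕜 + 2 * re ⟪v, u⟫_𝕜

/-!
Translate by the equilibrium: since `A x_e + B u_e = 0`, the substitution
`(x, u) ↦ (x + x_e, u + u_e)` leaves the vector field `A x + B u` unchanged, turns `P x + w` into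
`P x + (w + P x_e)`, and, by expanding the squares, turns `ℓ - ℓ(x_e, u_e)` into the stage cost with
linear terms `z + C*C x_e` and `v + K*K u_e`. It is a bijection of `dom A × U`.
-/

section Dissipativity

variable {𝕜 H U : Type*} [RCLike 𝕜] [SeminormedAddCommGroup H] [InnerProductSpace 𝕜 H]
  [AddCommGroup U] [Module 𝕜 U]

/-- Strict pre-dissipativity at the state `x₀` of the system `x' = A x + B u` with supply rate `s`
and quadratic storage function `V x = ⟪P x, x⟫ + 2 re ⟪w, x⟫`, in differential form: for
self-adjoint `P` the left-hand side is the derivative of `V` along trajectories. The supply rate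
of an optimal control problem is its stage cost minus the stage cost at the equilibrium.
Self-adjointness of `P` and `α` being of class `𝒦` are not built into the predicate. -/
def IsStrictlyPreDissipative (A : H →ₗ.[𝕜] H) (B : U →ₗ[𝕜] H) (P : H →ₗ[𝕜] H) (w : H)
    (s : H → U → ℝ) (α : ℝ → ℝ) (x₀ : H) : Prop :=
  ∀ (x : A.domain) (u : U), 2 * re ⟪A x + B u, P x + w⟫_𝕜 ≤ s x u - α ‖(x : H) - x₀‖

theorem isStrictlyPreDissipative_add_iff {A : H →ₗ.[𝕜] H} {B : U →ₗ[𝕜] H} {xe : A.domain} {ue : U}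
    (heq : A xe + B ue = 0) (P : H →ₗ[𝕜] H) (w : H) (s : H → U → ℝ) (α : ℝ → ℝ) (x₀ : H) :
    IsStrictlyPreDissipative A B P w s α (x₀ + xe) ↔
      IsStrictlyPreDissipative A B P (w + P xe) (fun x u ↦ s (x + xe) (u + ue)) α x₀ := by
  have dynamics_add (x : A.domain) (u : U) : A (x + xe) + B (u + ue) = A x + B u := by
    rw [A.map_add, map_add, add_add_add_comm, heq, add_zero]
  have gradient_add (x : H) : P (x + xe) + w = P x + (w + P xe) := by
    rw [map_add, add_assoc, add_comm w]
  unfold IsStrictlyPreDissipative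
  rw [(Equiv.addRight xe).surjective.forall]
  refine forall_congr' fun x ↦ ?_
  rw [(Equiv.addRight ue).surjective.forall]
  simp only [Equiv.coe_addRight, dynamics_add, Submodule.coe_add, gradient_add,
    add_sub_add_right_eq_sub]

end Dissipativity

section StageCost

variable {𝕜 H U Y Z : Type*} [RCLike 𝕜]
  [NormedAddCommGroup H] [InnerProductSpace 𝕜 H] [CompleteSpace H]
  [NormedAddCommGroup U] [InnerProductSpace 𝕜 U] [CompleteSpace U]
  [NormedAddCommGroup Y] [InnerProductSpace 𝕜 Y] [CompleteSpace Y]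
  [NormedAddCommGroup Z] [InnerProductSpace 𝕜 Z] [CompleteSpace Z]

theorem norm_map_add_sq_eq_adjoint (C : H →L[𝕜] Y) (x y : H) :
    ‖C (x + y)‖ ^ 2 = ‖C x‖ ^ 2 + 2 * re ⟪adjoint C (C y), x⟫_𝕜 + ‖C y‖ ^ 2 := by
  rw [map_add, norm_add_sq (𝕜 := 𝕜), inner_re_symm, adjoint_inner_left]

theorem ell_add_sub_ell (C : H →L[𝕜] Y) (K : U →L[𝕜] Z) (z xe x : H) (v ue u : U) :
    ell C K z v (x + xe) (u + ue) - ell C K z v xe ue =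
      ell C K (z + adjoint C (C xe)) (v + adjoint K (K ue)) x u := by
  simp only [ell, norm_map_add_sq_eq_adjoint, inner_add_left, inner_add_right, map_add re]
  ring

theorem strict_predissipativity_quadratic_shift_iff_general
    {A : H →ₗ.[𝕜] H} {B : U →ₗ[𝕜] H} {xe : A.domain} {ue : U} (heq : A xe + B ue = 0)
    (C : H →L[𝕜] Y) (K : U →L[𝕜] Z) (z : H) (v : U) (P : H →ₗ[𝕜] H) (w : H) (α : ℝ → ℝ) :
    IsStrictlyPreDissipative A B P w (fun x u ↦ ell C K z v x u - ell C K z v xe ue) α xe ↔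
      IsStrictlyPreDissipative A B P (w + P xe)
        (ell C K (z + adjoint C (C xe)) (v + adjoint K (K ue))) α 0 := by
  simpa only [zero_add, ell_add_sub_ell] using isStrictlyPreDissipative_add_iff heq P w
    (fun x u ↦ ell C K z v x u - ell C K z v xe ue) α 0

end StageCost

/-- **Lemma 4.3**: the OCP is strictly pre-dissipative at `(x_e,u_e)` with quadratic
storage function `V_{P,w}` if and only if the shifted OCP (with rotated stage cost
`ℓ̃`) is strictly pre-dissipative at `(0,0)` with quadratic storage function
`V_{P,w̃}`, where `w̃ = w + Px_e`. -/
theorem strict_predissipativity_quadratic_shift_iff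
    {𝕜 H U Y Z : Type*} [RCLike 𝕜]
    [NormedAddCommGroup H] [InnerProductSpace 𝕜 H] [CompleteSpace H]
    [NormedAddCommGroup U] [InnerProductSpace 𝕜 U] [CompleteSpace U]
    [NormedAddCommGroup Y] [InnerProductSpace 𝕜 Y] [CompleteSpace Y]
    [NormedAddCommGroup Z] [InnerProductSpace 𝕜 Z] [CompleteSpace Z]
    (A : H →ₗ.[𝕜] H) (hA : Dense (A.domain : Set H))
    (B : U →L[𝕜] H) (C : H →L[𝕜] Y) (K : U →L[𝕜] Z) (z : H) (v : U)
    (xe : H) (ue : U) (hxe : xe ∈ A.domain) (heq : A ⟨xe, hxe⟩ + B ue = 0)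
    (P : H →L[𝕜] H) (hP : IsSelfAdjoint P) (w : H)
    (α : ℝ → ℝ) (hα : IsClassK α) :
    (∀ (x : A.domain) (u : U),
      2 * re ⟪A x + B u, P (x : H) + w⟫_𝕜 ≤
        ell C K z v (x : H) u - ell C K z v xe ue - α ‖(x : H) - xe‖)
    ↔
    (∀ (x : A.domain) (u : U),
      2 * re ⟪A x + B u, P (x : H) + (w + P xe)⟫_𝕜 ≤
        ‖C (x : H)‖ ^ 2 + ‖K u‖ ^ 2 +
          2 * re ⟪z + adjoint C (C xe), (x : H)⟫_𝕜 +
          2 * re ⟪v + adjoint K (K ue), u⟫_𝕜 - α ‖(x : H)‖) := by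
  simpa only [IsStrictlyPreDissipative, ell, sub_zero, coe_coe] using
    strict_predissipativity_quadratic_shift_iff_general (B := B.toLinearMap) heq C K z v P w α
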